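/- For all natural numbers n ≥ 1, k ≥ 1, and s ≥ 2, the equation 3^n + 2 = k^s has no solutions; that is, E_n = 3^n + 2 is never a perfect power with exponent greater than 1. -/

import Mathlib

/-- Thue's lemma: small solutions of a linear congruence. -/
lemma thue_small (k : ℕ) (x : ℤ) (hk : 0 < k) (hsq : ∀ r : ℕ, r * r ≠ k) :
    ∃ a b : ℤ, (a ≠ 0 ∨ b ≠ 0) ∧ a ^ 2 < k ∧ b ^ 2 < k ∧ (k : ℤ) ∣ a - x * b := by
  have : NeZero k := ⟨hk.ne'⟩
  set r := Nat.sqrt k with hr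
  have h1 : r * r < k := lt_of_le_of_ne (Nat.sqrt_le k) (hsq r)
  have h2 : k < (r + 1) * (r + 1) := Nat.lt_succ_sqrt k
  let f : Fin (r + 1) × Fin (r + 1) → ZMod k := fun p => (p.1 : ℕ) - (x : ZMod k) * (p.2 : ℕ)
  obtain ⟨p, q, hpq, hf⟩ := Fintype.exists_ne_map_eq_of_card_lt f (by simpa [ZMod.card] using h2)
  have bd : ∀ i j : Fin (r + 1), (((i : ℕ) : ℤ) - (j : ℕ)) ^ 2 < k := by
    intro i j
    have hi := i.2
    have hj := j.2
    have h3 : |(((i : ℕ) : ℤ) - (j : ℕ))| ≤ r := by rw [abs_le]; omega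
    have h4 : (((i : ℕ) : ℤ) - (j : ℕ)) ^ 2 ≤ (r : ℤ) ^ 2 := by
      rw [← sq_abs]; gcongr
    have h5 : (r : ℤ) * r < k := by exact_mod_cast h1
    nlinarith
  refine ⟨((p.1 : ℕ) : ℤ) - (q.1 : ℕ), ((p.2 : ℕ) : ℤ) - (q.2 : ℕ), ?_, bd _ _, bd _ _, ?_⟩
  · by_contra! h
    apply hpq
    ext <;> omega
  · rw [← ZMod.intCast_zmod_eq_zero_iff_dvd]
    simp only [f] at hf
    push_cast
    linear_combination hf

lemma rep_form (c : ℤ) (k : ℕ) (x : ℤ) (hc : c = 1 ∨ c = 3) (h3 : k % 3 = 2) (h2 : k % 2 = 1)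
    (hd : (k : ℤ) ∣ c * x ^ 2 + 2) :
    ∃ a b : ℤ, c * a ^ 2 + 2 * b ^ 2 = k ∧ (k : ℤ) ∣ a - x * b := by
  have sq3 : ∀ z : ℤ, z ^ 2 % 3 = 0 ∨ z ^ 2 % 3 = 1 := by
    intro z
    have : z % 3 = 0 ∨ z % 3 = 1 ∨ z % 3 = 2 := by omega
    rcases this with h | h | h <;> simp [pow_two, Int.mul_emod, h]
  have ev : ∀ z : ℤ, 2 ∣ z ^ 2 → 2 ∣ z := fun z h => Int.prime_two.dvd_of_dvd_pow h
  have cop : IsCoprime (k : ℤ) 2 := by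
    rw [Int.isCoprime_iff_gcd_eq_one]
    have : Nat.Coprime k 2 := by
      rw [Nat.coprime_two_right, Nat.odd_iff]; exact h2
    exact_mod_cast this
  obtain ⟨a, b, h0, ha, hb, v, hv⟩ := thue_small k x (by omega) (by
    intro r hr
    have := sq3 r
    have h4 : (r : ℤ) ^ 2 = k := by rw [← hr]; push_cast; ring
    omega)
  obtain ⟨w, hw⟩ := hd
  have hm : c * a ^ 2 + 2 * b ^ 2 = k * (w * b ^ 2 + c * v * (a + x * b)) := by
    linear_combination b ^ 2 * hw + c * (a + x * b) * hv
  generalize w * b ^ 2 + c * v * (a + x * b) = m at hm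
  have hpos : 0 < c * a ^ 2 + 2 * b ^ 2 := by
    rcases h0 with h | h <;> have := sq_pos_of_ne_zero h <;> rcases hc with rfl | rfl <;>
      nlinarith [sq_nonneg a, sq_nonneg b]
  have hk0 : (0 : ℤ) < k := by omega
  have hm0 : 0 < m := by
    by_contra! h
    nlinarith
  rcases hc with rfl | rfl
  · have hm3 : m < 3 := by
      by_contra! h
      nlinarith
    obtain rfl | rfl : m = 1 ∨ m = 2 := by omega
    · exact ⟨a, b, by linarith, v, hv⟩
    · obtain ⟨a', rfl⟩ := ev a (by omega)
      refine ⟨b, -a', by linarith, ?_⟩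
      apply cop.dvd_of_dvd_mul_right
      exact ⟨w * b + x * v , by linear_combination b * hw + x * hv⟩
  · have hm3 : m < 5 := by
      by_contra! h
      nlinarith
    obtain rfl | rfl | rfl | rfl : m = 1 ∨ m = 2 ∨ m = 3 ∨ m = 4 := by omega
    · exact ⟨a, b, by linarith, v, hv⟩
    · exfalso
      have := sq3 b
      obtain ⟨a', rfl⟩ := ev a (by omega)
      ring_nf at hm
      omega
    · exfalso
      have := sq3 a
      obtain ⟨b', rfl⟩ := Int.prime_three.dvd_of_dvd_pow (show 3 ∣ b ^ 2 by omega)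
      ring_nf at hm
      omega
    · obtain ⟨a', rfl⟩ := ev a (by omega)
      obtain ⟨b', rfl⟩ := ev b (by ring_nf at hm ⊢; omega)
      refine ⟨a', b', by linarith, ?_⟩
      apply cop.dvd_of_dvd_mul_right
      exact ⟨v, by linear_combination hv⟩

lemma power_form (c x k a b : ℤ) (t : ℕ) (hc : 0 < c) (ht : 1 ≤ t) (hk : 0 < k) (hodd : k % 2 = 1)
    (h : c * x ^ 2 + 2 = k ^ (2 * t + 1)) (hab : c * a ^ 2 + 2 * b ^ 2 = k) (hd : k ∣ a - x * b) :
    ∃ U V : ℤ, (⟨c * a ^ 2 - 2 * b ^ 2, 2 * a * b⟩ : ℤ√(-2 * c)) ^ t = ⟨U, V⟩ ∧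
      ∃ e : ℤ, e ^ 2 = 1 ∧ x = e * (a * U - 2 * b * V) ∧ 1 = e * (b * U + c * a * V) := by
  obtain ⟨v, hv⟩ := hd
  set u : ℤ := b * k ^ (2 * t) + c * x * v with hu
  have hku : k * u = c * x * a + 2 * b := by
    rw [hu]; linear_combination (-b) * h - c * x * hv
  have e1 : a * u - 2 * b * v = x := by
    apply mul_left_cancel₀ hk.ne'
    linear_combination a * hku + 2 * b * hv + x * hab
  have e2 : b * u + c * a * v = 1 := by
    apply mul_left_cancel₀ hk.ne'
    linear_combination b * hku - c * a * hv + hab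
  have hN : u ^ 2 + 2 * c * v ^ 2 = k ^ (2 * t) := by
    apply mul_left_cancel₀ hk.ne'
    have : (c * a ^ 2 + 2 * b ^ 2) * (u ^ 2 + 2 * c * v ^ 2)
        = c * (a * u - 2 * b * v) ^ 2 + 2 * (b * u + c * a * v) ^ 2 := by ring
    rw [hab, e1, e2] at this
    rw [this]; linear_combination h
  set om : ℤ√(-2 * c) := ⟨c * a ^ 2 - 2 * b ^ 2, 2 * a * b⟩ with hom
  set g : ℤ√(-2 * c) := ⟨u, v⟩ with hg
  have s1 : om * g ^ 2 + star om * star g ^ 2 = ((2 * k ^ (2 * t + 1) - 8 : ℤ) : ℤ√(-2 * c)) := by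
    have : c * (a * u - 2 * b * v) ^ 2 - 2 * (b * u + c * a * v) ^ 2 = k ^ (2 * t + 1) - 4 := by
      rw [e1, e2]; linear_combination h
    rw [Zsqrtd.ext_iff]
    constructor
    · simp only [hom, hg, pow_two, Zsqrtd.re_add, Zsqrtd.re_mul, Zsqrtd.im_mul, Zsqrtd.re_star,
        Zsqrtd.im_star, Zsqrtd.re_intCast]
      linear_combination 2 * this
    · simp only [hom, hg, pow_two, Zsqrtd.im_add, Zsqrtd.re_mul, Zsqrtd.im_mul, Zsqrtd.re_star,
        Zsqrtd.im_star, Zsqrtd.im_intCast]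
      ring
  have s2 : om * star om = ((k ^ 2 : ℤ) : ℤ√(-2 * c)) := by
    rw [← Zsqrtd.norm_eq_mul_conj, Zsqrtd.norm_def]
    congr 1
    simp only [hom]
    rw [← hab]; ring
  have s3 : g * star g = ((k ^ (2 * t) : ℤ) : ℤ√(-2 * c)) := by
    rw [← Zsqrtd.norm_eq_mul_conj, Zsqrtd.norm_def]
    congr 1
    simp only [hg]
    rw [← hN]; ring
  have cop : IsCoprime (k ^ (2 * t + 1)) 8 := by
    have : IsCoprime k 2 := by
      refine ⟨1, -(k / 2), ?_⟩
      omega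
    have h8 : (8 : ℤ) = 2 ^ 3 := by norm_num
    rw [h8]
    exact this.pow
  obtain ⟨p, q, hpq⟩ := cop
  have hpq' : (p : ℤ√(-2 * c)) * k ^ (2 * t + 1) + q * 8 = 1 := by exact_mod_cast hpq
  have cop2 : IsCoprime om (star g) := by
    refine ⟨(p + 2 * q) * star om * k ^ (2 * t - 1) - q * g ^ 2, - q * star om * star g, ?_⟩
    have hp : (k : ℤ√(-2 * c)) ^ (2 * t + 1) = k ^ 2 * k ^ (2 * t - 1) := by
      rw [← pow_add]; congr 1; omega
    push_cast at s1 s2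
    linear_combination hpq' - q * s1 + (p + 2 * q) * k ^ (2 * t - 1) * s2 - (p + 2 * q) * hp
  have s4 : om ^ t ∣ g * star g := by
    rw [s3]
    refine ⟨star om ^ t, ?_⟩
    rw [← mul_pow, s2]; push_cast; rw [pow_mul]
  obtain ⟨d, hgd⟩ := (cop2.pow_left (m := t)).dvd_of_dvd_mul_right s4
  have hnd : d.norm = 1 := by
    have h5 : g.norm = (om ^ t).norm * d.norm := by rw [hgd, Zsqrtd.norm_mul]
    have h6 : g.norm = k ^ (2 * t) := by
      rw [Zsqrtd.norm_def, hg, ← hN]; ring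
    have h7 : (om ^ t).norm = k ^ (2 * t) := by
      have : (((om ^ t).norm : ℤ) : ℤ√(-2 * c)) = ((k ^ (2 * t) : ℤ) : ℤ√(-2 * c)) := by
        rw [Zsqrtd.norm_eq_mul_conj, star_pow, ← mul_pow, s2]; push_cast; rw [pow_mul]
      exact_mod_cast this
    rw [h6, h7] at h5
    have : (0 : ℤ) < k ^ (2 * t) := by positivity
    nlinarith
  rw [Zsqrtd.norm_def] at hnd
  have him : d.im = 0 := by
    by_contra hne
    have := sq_pos_of_ne_zero hne
    nlinarith [sq_nonneg d.re]
  rw [him] at hnd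
  have hre := congrArg Zsqrtd.re hgd
  have himg := congrArg Zsqrtd.im hgd
  simp only [Zsqrtd.re_mul, Zsqrtd.im_mul, him, hg] at hre himg
  refine ⟨(om ^ t).re, (om ^ t).im, rfl, d.re, by linarith, ?_, ?_⟩
  · rw [← e1, hre, himg]; ring
  · rw [← e2, hre, himg]; ring

lemma pow_congr (c a b : ℤ) (t : ℕ) :
    ∃ U W : ℤ, (⟨c * a ^ 2 - 2 * b ^ 2, 2 * a * b⟩ : ℤ√(-2 * c)) ^ t = ⟨U, 2 * a * b * W⟩ ∧
      (3 ∣ a → b ^ 2 = 1 → 9 ∣ U - 1 + 3 * t ∧ 3 ∣ W - t) := by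
  induction t with
  | zero => exact ⟨1, 0, by ext <;> simp, by simp⟩
  | succ t ih =>
    obtain ⟨U, W, h, hh⟩ := ih
    refine ⟨U * (c * a ^ 2 - 2 * b ^ 2) + (-2 * c) * (2 * a * b * W) * (2 * a * b),
      U + W * (c * a ^ 2 - 2 * b ^ 2), ?_, ?_⟩
    · rw [pow_succ, h, Zsqrtd.ext_iff]
      constructor
      · simp only [Zsqrtd.re_mul]
      · simp only [Zsqrtd.im_mul]; ring
    · rintro ⟨a', rfl⟩ hb
      obtain ⟨⟨y, hy⟩, ⟨z, hz⟩⟩ := hh ⟨a', rfl⟩ hb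
      obtain rfl : U = 9 * y + 1 - 3 * t := by linarith
      obtain rfl : W = 3 * z + t := by linarith
      have e : (-2 * c) * (2 * (3 * a') * b * (3 * z + t)) * (2 * (3 * a') * b)
        = -72 * c * a' ^ 2 * (3 * z + t) * b ^ 2 := by ring
      rw [e, hb]
      push_cast
      constructor
      · refine ⟨(9 * y + 1 - 3 * t) * c * a' ^ 2 - 2 * y + t - 8 * c * a' ^ 2 * (3 * z + t), ?_⟩
        ring
      · refine ⟨3 * y - t + (3 * z + t) * 3 * c * a' ^ 2 - 2 * z - t, ?_⟩
        ring

lemma five_case (n s : ℕ) (hs : 2 ≤ s) : 3 ^ n + 2 ≠ 5 ^ s := by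
  intro h
  have h25 : (3 ^ n + 2) % 25 = 0 := by
    rw [h]; exact Nat.mod_eq_zero_of_dvd (pow_dvd_pow 5 hs)
  have hn : n = 20 * (n / 20) + n % 20 := by omega
  have hlt : n % 20 < 20 := Nat.mod_lt _ (by norm_num)
  have hss : s = 5 * (s / 5) + s % 5 := by omega
  have hslt : s % 5 < 5 := Nat.mod_lt _ (by norm_num)
  have h11 : (3 ^ n + 2) % 11 = 5 ^ s % 11 := by rw [h]
  rw [hn, pow_add, pow_mul, Nat.add_mod, Nat.mul_mod, Nat.pow_mod] at h25
  rw [hn, hss, pow_add, pow_mul, pow_add, pow_mul, Nat.add_mod, Nat.mul_mod, Nat.pow_mod,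
    Nat.mul_mod (_ ^ (s / 5)), Nat.pow_mod (5 ^ 5)] at h11
  generalize n % 20 = i at *
  generalize s % 5 = j at *
  norm_num at h25 h11
  interval_cases i <;> first | (norm_num at h25; done) | skip
  interval_cases j <;> norm_num at h11

lemma core (c x : ℤ) (m t k : ℕ) (hc : c = 1 ∨ c = 3) (hx : x = 3 ^ m) (ht : 1 ≤ t)
    (h3 : k % 3 = 2) (h2 : k % 2 = 1) (h : c * x ^ 2 + 2 = (k : ℤ) ^ (2 * t + 1)) : k = 5 := by
  have hk0 : (0 : ℤ) < k := by omega
  have hc0 : 0 < c := by omega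
  obtain ⟨a, b, hab, hd⟩ := rep_form c k x hc h3 h2
    (by rw [h]; exact dvd_pow_self _ (by omega))
  obtain ⟨U, V, hUV, e, he, hxe, h1e⟩ :=
    power_form c x k a b t hc0 ht hk0 (by omega) h hab hd
  obtain ⟨U', W, hUW, hcong⟩ := pow_congr c a b t
  rw [hUV, Zsqrtd.ext_iff] at hUW
  obtain ⟨hU, hV⟩ := hUW
  simp only at hU hV
  subst hU hV
  have hb : b ^ 2 = 1 := by
    have : b ∣ 1 := ⟨e * (U + c * a * (2 * a * W)), by rw [h1e]; ring⟩
    have := Int.isUnit_iff.1 (isUnit_of_dvd_one this)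
    rcases this with rfl | rfl <;> norm_num
  have hxa : x = a * (e * (U - 4 * W)) := by
    rw [hxe]; linear_combination (-4) * e * a * W * hb
  by_cases h3a : 3 ∣ a
  · exfalso
    obtain ⟨⟨y, hy⟩, ⟨z, hz⟩⟩ := hcong h3a hb
    obtain ⟨a', rfl⟩ := h3a
    have hsq : (U + 18 * c * a' ^ 2 * W) ^ 2 = 1 := by
      have : (1 : ℤ) ^ 2 = e ^ 2 * b ^ 2 * (U + 18 * c * a' ^ 2 * W) ^ 2 := by
        rw [h1e]; ring
      rw [he, hb] at this; linarith
    have hpm : U + 18 * c * a' ^ 2 * W = 1 ∨ U + 18 * c * a' ^ 2 * W = -1 :=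
      by
      have h9 : (U + 18 * c * a' ^ 2 * W - 1) * (U + 18 * c * a' ^ 2 * W + 1) = 0 := by
        linear_combination hsq
      rcases mul_eq_zero.1 h9 with h9 | h9
      · left; linarith
      · right; linarith
    have ht3 : (t : ℤ) % 3 = 0 := by
      have : 18 * c * a' ^ 2 * W = 18 * (c * a' ^ 2 * W) := by ring
      rw [this] at hpm
      omega
    have hnd : ¬ 3 ∣ e * (U - 4 * W) := by
      intro hdv
      rcases Int.prime_three.dvd_or_dvd hdv with h5 | h5
      · have := dvd_pow h5 (two_ne_zero)
        rw [he] at this; norm_num at this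
      · omega
    have hun : IsUnit (e * (U - 4 * W)) := by
      have hco : IsCoprime (e * (U - 4 * W)) (3 ^ m) :=
        ((Int.prime_three.coprime_iff_not_dvd.2 hnd).symm).pow_right
      apply hco.isUnit_of_dvd' dvd_rfl
      rw [← hx, hxa]; exact dvd_mul_left _ _
    have hsq1 : (e * (U - 4 * W)) ^ 2 = 1 := by
      rcases Int.isUnit_iff.1 hun with h6 | h6 <;> rw [h6] <;> norm_num
    have hxx : x ^ 2 = (3 * a') ^ 2 := by
      rw [hxa, mul_pow, hsq1, mul_one]
    have hkk : (k : ℤ) ^ (2 * t + 1) = k ^ 1 := by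
      rw [← h, hxx, pow_one, ← hab, hb]; ring
    have := Nat.pow_right_injective (show 2 ≤ k by omega) (by exact_mod_cast hkk)
    omega
  · have hco : IsCoprime a (3 ^ m) := ((Int.prime_three.coprime_iff_not_dvd.2 h3a).symm).pow_right
    have hun : IsUnit a := by
      apply hco.isUnit_of_dvd' dvd_rfl
      rw [← hx, hxa]; exact dvd_mul_right _ _
    have ha : a ^ 2 = 1 := by
      rcases Int.isUnit_iff.1 hun with h6 | h6 <;> rw [h6] <;> norm_num
    rw [ha, hb] at hab
    omega

theorem E_not_perfect_power (n k s : ℕ) (hn : 1 ≤ n) (hk : 1 ≤ k) (hs : 2 ≤ s) :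
    3 ^ n + 2 ≠ k ^ s := by
  intro h
  have hm3 : k ^ s % 3 = 2 := by
    rw [← h]
    have : 3 ∣ 3 ^ n := dvd_pow_self 3 (by omega)
    omega
  have hk3 : k % 3 = 2 := by
    have : k % 3 = 0 ∨ k % 3 = 1 ∨ k % 3 = 2 := by omega
    rcases this with h0 | h0 | h0
    · rw [Nat.pow_mod, h0, zero_pow (by omega)] at hm3; norm_num at hm3
    · rw [Nat.pow_mod, h0, one_pow] at hm3; norm_num at hm3
    · exact h0
  have hk2 : k % 2 = 1 := by
    have ho : Odd (k ^ s) := by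
      rw [← h]
      exact (Odd.pow (by decide)).add_even (by decide)
    exact Nat.odd_iff.1 ((Nat.odd_pow_iff (by omega)).1 ho)
  obtain ⟨t, rfl | rfl⟩ := Nat.even_or_odd' s
  · rw [pow_mul, Nat.pow_mod, Nat.pow_mod k, hk3] at hm3
    norm_num at hm3
  · have hk5 : k = 5 := by
      obtain ⟨m, rfl | rfl⟩ := Nat.even_or_odd' n
      · apply core 1 (3 ^ m) m t k (Or.inl rfl) rfl (by omega) hk3 hk2
        rw [one_mul, ← pow_mul, mul_comm m]; exact_mod_cast h
      · apply core 3 (3 ^ m) m t k (Or.inr rfl) rfl (by omega) hk3 hk2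
        rw [← pow_mul, mul_comm m, ← pow_succ']; exact_mod_cast h
    subst hk5
    exact five_case _ _ hs h
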